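/- Let M be a tropical oriented matroid with parameters (n,d) in general position, let E ⊆ [n], and for each i ∈ E let I_i be a nonempty proper subset of [d]. Suppose there exists A ∈ M such that A_i ∩ I_i ≠ ∅ and A_i \ I_i ≠ ∅ for every i ∈ E. Then for every sign vector X ∈ {+, −, 0}^E there exists B ∈ M such that for each i ∈ E: B_i ⊆ I_i if X_i = +; B_i ⊆ [d] \ I_i if X_i = −; and B_i ∩ I_i ≠ ∅ and B_i \ I_i ≠ ∅ if X_i = 0. -/

import Mathlib

/-- A step from `j` to `k` along an edge of the comparability graph `Γ(A,B)`,
traversed in an allowed direction: there is `i` with `j ∈ A i`, `k ∈ B i`, `j ≠ k`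
(such an edge is undirected precisely when moreover `j ∈ B i` and `k ∈ A i`, and then
the reversed step is also of this form). -/
def CompStep {n d : ℕ} (A B : Fin n → Finset (Fin d)) (j k : Fin d) : Prop :=
  ∃ i, j ∈ A i ∧ k ∈ B i ∧ j ≠ k

/-- A traversal of a *directed* edge of `Γ(A,B)` in its given direction. -/
def CompDirStep {n d : ℕ} (A B : Fin n → Finset (Fin d)) (j k : Fin d) : Prop :=
  ∃ i, j ∈ A i ∧ k ∈ B i ∧ j ≠ k ∧ ¬ (j ∈ B i ∧ k ∈ A i)

/-- The comparability graph `Γ(A,B)` is acyclic: there is no closed walk consisting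
of legally traversed edges at least one of which is directed. -/
def CompAcyclic {n d : ℕ} (A B : Fin n → Finset (Fin d)) : Prop :=
  ¬ ∃ j k : Fin d, CompDirStep A B j k ∧ Relation.ReflTransGen (CompStep A B) k j

/-- An ordered partition of the ground set: a list of nonempty, pairwise disjoint
sets covering everything. -/
def IsOrderedPartition {α : Type*} [Fintype α] [DecidableEq α]
    (P : List (Finset α)) : Prop :=
  (∀ p ∈ P, p.Nonempty) ∧ P.Pairwise Disjoint ∧ P.foldr (· ∪ ·) ∅ = Finset.univ

/-- `refineEntry s P = s ∩ P_{m}` where `m` is the first index with `s ∩ P_m ≠ ∅`. -/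
def refineEntry {α : Type*} [DecidableEq α] (s : Finset α) :
    List (Finset α) → Finset α
  | [] => ∅
  | p :: rest => if (s ∩ p).Nonempty then s ∩ p else refineEntry s rest

/-- The refinement `A|_P` of a type `A` with respect to an ordered partition `P`. -/
def refineType {n d : ℕ} (A : Fin n → Finset (Fin d)) (P : List (Finset (Fin d))) :
    Fin n → Finset (Fin d) :=
  fun i => refineEntry (A i) P

/-- `M` is a tropical oriented matroid with parameters `(n,d)`. -/
def IsTOM (n d : ℕ) (M : Set (Fin n → Finset (Fin d))) : Prop :=
  (∀ A ∈ M, ∀ i, (A i).Nonempty) ∧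
  (∀ j : Fin d, (fun _ : Fin n => ({j} : Finset (Fin d))) ∈ M) ∧
  (∀ A ∈ M, ∀ B ∈ M, CompAcyclic A B) ∧
  (∀ A ∈ M, ∀ B ∈ M, ∀ j : Fin n, ∃ C ∈ M, C j = A j ∪ B j ∧
      ∀ k, C k = A k ∨ C k = B k ∨ C k = A k ∪ B k) ∧
  (∀ A ∈ M, ∀ P : List (Finset (Fin d)), IsOrderedPartition P → refineType A P ∈ M)

/-- The type graph `K_A`: the bipartite graph on `N_1,…,N_n,D_1,…,D_d` with an edge
`{N_i, D_j}` whenever `j ∈ A_i`. -/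
def typeGraph {n d : ℕ} (A : Fin n → Finset (Fin d)) : SimpleGraph (Fin n ⊕ Fin d) :=
  SimpleGraph.fromRel (fun x y =>
    match x, y with
    | Sum.inl i, Sum.inr j => j ∈ A i
    | _, _ => False)

/-- The dimension of a type: the number of connected components of `K_A` minus 1
(as an integer). -/
noncomputable def typeDim {n d : ℕ} (A : Fin n → Finset (Fin d)) : ℤ :=
  (Nat.card (typeGraph A).ConnectedComponent : ℤ) - 1

/-- A tropical oriented matroid is in general position if all its type graphs are
acyclic. -/
def InGeneralPosition {n d : ℕ} (M : Set (Fin n → Finset (Fin d))) : Prop :=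
  ∀ A ∈ M, (typeGraph A).IsAcyclic

/-- Two types are incident if one is an entrywise subset of the other. -/
def Incident {n d : ℕ} (X Y : Fin n → Finset (Fin d)) : Prop :=
  (∀ i, X i ⊆ Y i) ∨ (∀ i, Y i ⊆ X i)

/-- The combinatorial convex hull `M_{AB}` of two types within a collection `M`. -/
def Hull {n d : ℕ} (M : Set (Fin n → Finset (Fin d)))
    (A B : Fin n → Finset (Fin d)) : Set (Fin n → Finset (Fin d)) :=
  {C | C ∈ M ∧ ∀ i, C i = A i ∨ C i = B i ∨ C i = A i ∪ B i}

/-- `X` and `Y` are joined by a finite sequence of types in `S` in which consecutive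
types are incident. -/
def ConnectedIn {n d : ℕ} (S : Set (Fin n → Finset (Fin d)))
    (X Y : Fin n → Finset (Fin d)) : Prop :=
  Relation.ReflTransGen (fun U V => U ∈ S ∧ V ∈ S ∧ Incident U V) X Y

/-!
If `K_A` is acyclic, each of its edges is a bridge. Shrink one entry `A i` to a nonempty subset `T`,
and let `S` be the set of those `j` for which `D_j` is still connected to `N_i`. No edge lost in the
shrinking can lead into `S`, hence `A i ∩ S = T`, whereas every other entry of `A` lies inside `S`
or is disjoint from it. So refining `A` by `(S, Sᶜ)` changes the entry `A i` to `T` and nothing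
else. Repeating this entry by entry yields every type below `A`, in particular the one whose entries
are `A i ∩ I i`, `A i \ I i` or `A i` according to the prescribed sign.
-/

section OrderedPartition

variable {α : Type*} [DecidableEq α] {s p : Finset α}

lemma isOrderedPartition_pair_compl [Fintype α] (hp : p.Nonempty) (hpc : pᶜ.Nonempty) :
    IsOrderedPartition [p, pᶜ] := by
  simp [IsOrderedPartition, hp, hpc, disjoint_compl_right]

lemma refineEntry_cons_of_nonempty (P : List (Finset α)) (h : (s ∩ p).Nonempty) :
    refineEntry s (p :: P) = s ∩ p :=
  if_pos h

lemma refineEntry_pair_compl_eq_self [Fintype α] (h : s ⊆ p ∨ Disjoint s p) :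
    refineEntry s [p, pᶜ] = s := by
  rcases s.eq_empty_or_nonempty with rfl | hs
  · simp [refineEntry]
  rcases h with hsub | hdisj
  · have hinter : s ∩ p = s := Finset.inter_eq_left.2 hsub
    rw [refineEntry_cons_of_nonempty _ (hinter.symm ▸ hs), hinter]
  · have hcompl : s ∩ pᶜ = s :=
      Finset.inter_eq_left.2 (Finset.subset_compl_iff_disjoint_right.2 hdisj)
    simp [refineEntry, Finset.disjoint_iff_inter_eq_empty.1 hdisj, hcompl, hs]

end OrderedPartition

section TypeGraph

variable {n d : ℕ} {A : Fin n → Finset (Fin d)} {i k : Fin n} {j : Fin d} {T : Finset (Fin d)}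

lemma typeGraph_adj_inl_inr : (typeGraph A).Adj (Sum.inl i) (Sum.inr j) ↔ j ∈ A i := by
  simp [typeGraph]

lemma typeGraph_mono : Monotone (typeGraph : (Fin n → Finset (Fin d)) → _) := by
  rintro A B hAB (i | j) (i' | j') hadj
  · simp [typeGraph] at hadj
  · exact typeGraph_adj_inl_inr.2 (hAB i (typeGraph_adj_inl_inr.1 hadj))
  · exact (typeGraph_adj_inl_inr.2 (hAB i' (typeGraph_adj_inl_inr.1 hadj.symm))).symm
  · simp [typeGraph] at hadj

lemma not_reachable_typeGraph_update (hacyc : (typeGraph A).IsAcyclic) (hT : T ⊆ A i)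
    (hjA : j ∈ A i) (hjT : j ∉ T) :
    ¬ (typeGraph (Function.update A i T)).Reachable (Sum.inl i) (Sum.inr j) := by
  have hbridge : (typeGraph A).IsBridge s(Sum.inl i, Sum.inr j) :=
    SimpleGraph.isAcyclic_iff_forall_adj_isBridge.1 hacyc (typeGraph_adj_inl_inr.2 hjA)
  have hdelete : (typeGraph (Function.update A i T)).deleteEdges {s(Sum.inl i, Sum.inr j)} =
      typeGraph (Function.update A i T) := by
    simpa [typeGraph_adj_inl_inr] using hjT
  have hle : typeGraph (Function.update A i T) ≤ typeGraph A :=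
    typeGraph_mono (update_le_self_iff.2 hT)
  exact fun hreach => SimpleGraph.isBridge_iff.1 hbridge
    (hreach.mono (hdelete.ge.trans (SimpleGraph.deleteEdges_mono hle)))

/-- The set of `j ∈ [d]` for which `D_j` lies in the connected component of `N_i` in the type graph
`K_A`. -/
noncomputable def componentColumns (A : Fin n → Finset (Fin d)) (i : Fin n) : Finset (Fin d) :=
  {j | (typeGraph A).Reachable (Sum.inl i) (Sum.inr j)}.toFinite.toFinset

lemma mem_componentColumns :
    j ∈ componentColumns A i ↔ (typeGraph A).Reachable (Sum.inl i) (Sum.inr j) := by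
  simp [componentColumns]

variable (A i) in
lemma subset_componentColumns_self : A i ⊆ componentColumns A i := fun _ hj =>
  mem_componentColumns.2 (typeGraph_adj_inl_inr.2 hj).reachable

lemma subset_or_disjoint_componentColumns :
    A k ⊆ componentColumns A i ∨ Disjoint (A k) (componentColumns A i) := by
  refine or_iff_not_imp_right.2 fun hmeet l hl => ?_
  obtain ⟨j, hjk, hji⟩ := Finset.not_disjoint_iff.1 hmeet
  have hstep : (typeGraph A).Reachable (Sum.inr j) (Sum.inr l) :=
    (typeGraph_adj_inl_inr.2 hjk).symm.reachable.trans (typeGraph_adj_inl_inr.2 hl).reachable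
  exact mem_componentColumns.2 ((mem_componentColumns.1 hji).trans hstep)

lemma inter_componentColumns_update (hacyc : (typeGraph A).IsAcyclic) (hT : T ⊆ A i) :
    A i ∩ componentColumns (Function.update A i T) i = T := by
  ext j
  rw [Finset.mem_inter]
  constructor
  · rintro ⟨hjA, hjS⟩
    by_contra hjT
    exact not_reachable_typeGraph_update hacyc hT hjA hjT (mem_componentColumns.1 hjS)
  · exact fun hjT => ⟨hT hjT, subset_componentColumns_self _ i (by simpa using hjT)⟩

lemma refineType_componentColumns_update (hacyc : (typeGraph A).IsAcyclic) (hT : T ⊆ A i)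
    (hne : T.Nonempty) :
    refineType A [componentColumns (Function.update A i T) i,
      (componentColumns (Function.update A i T) i)ᶜ] = Function.update A i T := by
  funext k
  have hinter := inter_componentColumns_update hacyc hT
  rcases eq_or_ne k i with rfl | hk
  · rw [refineType, refineEntry_cons_of_nonempty _ (hinter.symm ▸ hne), hinter,
      Function.update_self]
  · rw [refineType, ← Function.update_of_ne hk T A, refineEntry_pair_compl_eq_self]
    exact subset_or_disjoint_componentColumns

end TypeGraph

section Refinement

variable {n d : ℕ} {M : Set (Fin n → Finset (Fin d))}

/-- The surrounding axiom of tropical oriented matroids: every refinement of a member of `M` is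
again a member of `M`. -/
def IsRefinementClosed (M : Set (Fin n → Finset (Fin d))) : Prop :=
  ∀ A ∈ M, ∀ P : List (Finset (Fin d)), IsOrderedPartition P → refineType A P ∈ M

lemma IsTOM.isRefinementClosed (hM : IsTOM n d M) : IsRefinementClosed M :=
  hM.2.2.2.2

namespace IsRefinementClosed

variable {A : Fin n → Finset (Fin d)}

lemma update_mem (hM : IsRefinementClosed M) (hA : A ∈ M) (hacyc : (typeGraph A).IsAcyclic)
    {i : Fin n} {T : Finset (Fin d)} (hT : T ⊆ A i) (hne : (A i).Nonempty → T.Nonempty) :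
    Function.update A i T ∈ M := by
  rcases hT.eq_or_ssubset with rfl | hssub
  · rwa [Function.update_eq_self]
  obtain ⟨j, hjA, hjT⟩ := Finset.exists_of_ssubset hssub
  have hTne : T.Nonempty := hne ⟨j, hjA⟩
  rw [← refineType_componentColumns_update hacyc hT hTne]
  refine hM A hA _ (isOrderedPartition_pair_compl ?_ ⟨j, ?_⟩)
  · exact hTne.mono (by simpa using subset_componentColumns_self (Function.update A i T) i)
  · rw [Finset.mem_compl, mem_componentColumns]
    exact not_reachable_typeGraph_update hacyc hT hjA hjT

lemma mem_of_le (hM : IsRefinementClosed M) (hA : A ∈ M) (hacyc : (typeGraph A).IsAcyclic)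
    {B : Fin n → Finset (Fin d)} (hBA : B ≤ A) (hne : ∀ i, (A i).Nonempty → (B i).Nonempty) :
    B ∈ M := by
  suffices hpartial : ∀ s : Finset (Fin n), s.piecewise B A ∈ M by
    simpa using hpartial Finset.univ
  intro s
  induction s using Finset.induction_on with
  | empty => simpa using hA
  | insert i s his ih =>
    have hle : s.piecewise B A ≤ A := s.piecewise_le_of_le_of_le hBA le_rfl
    have heq : s.piecewise B A i = A i := s.piecewise_eq_of_notMem _ _ his
    rw [Finset.piecewise_insert]
    exact hM.update_mem ih (hacyc.anti (typeGraph_mono hle)) (heq ▸ hBA i) (heq ▸ hne i)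

end IsRefinementClosed

end Refinement

lemma exists_subset_realizing_sign {α : Type*} [Fintype α] [DecidableEq α] {s I : Finset α}
    (hsI : (s ∩ I).Nonempty ∧ (s \ I).Nonempty) (x : SignType) :
    ∃ t ⊆ s, t.Nonempty ∧ (x = SignType.pos → t ⊆ I) ∧
      (x = SignType.neg → t ⊆ Finset.univ \ I) ∧
      (x = SignType.zero → (t ∩ I).Nonempty ∧ (t \ I).Nonempty) := by
  cases x with
  | pos => exact ⟨s ∩ I, Finset.inter_subset_left, hsI.1, by simp⟩
  | neg => exact ⟨s \ I, Finset.sdiff_subset, hsI.2, by simp [Finset.sdiff_subset_sdiff]⟩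
  | zero => exact ⟨s, subset_rfl, hsI.1.mono Finset.inter_subset_left, by simpa using hsI⟩

theorem stmt_4_general {n d : ℕ} (M : Set (Fin n → Finset (Fin d))) (hM : IsRefinementClosed M)
    (E : Set (Fin n)) (I : Fin n → Finset (Fin d))
    (A : Fin n → Finset (Fin d)) (hA : A ∈ M) (hacyc : (typeGraph A).IsAcyclic)
    (hAI : ∀ i ∈ E, (A i ∩ I i).Nonempty ∧ (A i \ I i).Nonempty) (X : Fin n → SignType) :
    ∃ B ∈ M, ∀ i ∈ E,
      (X i = SignType.pos → B i ⊆ I i) ∧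
      (X i = SignType.neg → B i ⊆ Finset.univ \ I i) ∧
      (X i = SignType.zero → (B i ∩ I i).Nonempty ∧ (B i \ I i).Nonempty) := by
  have hentry (i : Fin n) : ∃ t ⊆ A i, ((A i).Nonempty → t.Nonempty) ∧ (i ∈ E →
      (X i = SignType.pos → t ⊆ I i) ∧ (X i = SignType.neg → t ⊆ Finset.univ \ I i) ∧
      (X i = SignType.zero → (t ∩ I i).Nonempty ∧ (t \ I i).Nonempty)) := by
    by_cases hi : i ∈ E
    · obtain ⟨t, hsub, hne, hsign⟩ := exists_subset_realizing_sign (hAI i hi) (X i)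
      exact ⟨t, hsub, fun _ => hne, fun _ => hsign⟩
    · exact ⟨A i, subset_rfl, id, fun h => absurd h hi⟩
  choose B hBA hne hsign using hentry
  exact ⟨B, hM.mem_of_le hA hacyc hBA hne, hsign⟩

theorem stmt_4 {n d : ℕ} (M : Set (Fin n → Finset (Fin d)))
    (hM : IsTOM n d M) (hgen : InGeneralPosition M)
    (E : Set (Fin n)) (I : Fin n → Finset (Fin d))
    (hI : ∀ i ∈ E, (I i).Nonempty ∧ I i ≠ Finset.univ)
    (A : Fin n → Finset (Fin d)) (hA : A ∈ M)
    (hAI : ∀ i ∈ E, (A i ∩ I i).Nonempty ∧ (A i \ I i).Nonempty)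
    (X : Fin n → SignType) :
    ∃ B ∈ M, ∀ i ∈ E,
      (X i = SignType.pos → B i ⊆ I i) ∧
      (X i = SignType.neg → B i ⊆ Finset.univ \ I i) ∧
      (X i = SignType.zero → (B i ∩ I i).Nonempty ∧ (B i \ I i).Nonempty) :=
  stmt_4_general M hM.isRefinementClosed E I A hA (hgen A hA) hAI X
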